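/- Under the threshold model, if Z_j is independent of the family {Z_k : k ∈ A} for a subset A ⊆ {1,…,d} not containing j, then E[U_j⁴ U_A⁴] ≤ |A|^{-1} Σ_{k∈A} E[θ_j^{-1}(1−θ_j)^{-1} θ_k^{-1}(1−θ_k)^{-1}]. -/

import Mathlib

/-!
Jensen's inequality for `x ↦ x ^ 4` bounds `U_A ^ 4` by the average of the `U_k ^ 4`, so it is
enough to treat `E[U_j ^ 4 U_k ^ 4]` for a single `k ∈ A`. As `Z` is independent of `θ`, this
expectation may be computed by freezing `θ` at a value `t`. For frozen `θ` the variables `U_j` and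
`U_k` are independent standardized Bernoulli variables with parameters `t_j` and `t_k`, whose fourth
moments are `1 / (t_j (1 - t_j)) - 3` and `1 / (t_k (1 - t_k)) - 3`.
-/

open MeasureTheory ProbabilityTheory
open scoped ENNReal NNReal

/-- The observed binary variable `X_j = 1{Z_j ≤ F_j⁻¹(θ_j)}` of the threshold model. -/
noncomputable def Xbin {Ω : Type*} {d : ℕ} (Z θ : Ω → Fin d → ℝ)
    (Finv : Fin d → ℝ → ℝ) (ω : Ω) (j : Fin d) : ℝ :=
  if Z ω j ≤ Finv j (θ ω j) then 1 else 0

/-- The standardized variable `U_j = (X_j − θ_j)/√(θ_j(1−θ_j))`. -/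
noncomputable def Ustd {Ω : Type*} {d : ℕ} (Z θ : Ω → Fin d → ℝ)
    (Finv : Fin d → ℝ → ℝ) (ω : Ω) (j : Fin d) : ℝ :=
  (Xbin Z θ Finv ω j - θ ω j) / Real.sqrt (θ ω j * (1 - θ ω j))

/-- The set average `U_A = |A|⁻¹ ∑_{k ∈ A} U_k`. -/
noncomputable def Uavg {Ω : Type*} {d : ℕ} (Z θ : Ω → Fin d → ℝ)
    (Finv : Fin d → ℝ → ℝ) (A : Finset (Fin d)) (ω : Ω) : ℝ :=
  (A.card : ℝ)⁻¹ * ∑ k ∈ A, Ustd Z θ Finv ω k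

section General

variable {Ω : Type*} [MeasurableSpace Ω] {μ : Measure Ω}

lemma ofReal_card_inv_mul_sum_pow_le {ι : Type*} {s : Finset ι} (hs : s.Nonempty) (u : ι → ℝ)
    {n : ℕ} (hn : Even n) :
    ENNReal.ofReal (((s.card : ℝ)⁻¹ * ∑ i ∈ s, u i) ^ n)
      ≤ (s.card : ℝ≥0∞)⁻¹ * ∑ i ∈ s, ENNReal.ofReal (u i ^ n) := by
  have card_pos : 0 < (s.card : ℝ) := by exact_mod_cast hs.card_pos
  have jensen : ((s.card : ℝ)⁻¹ * ∑ i ∈ s, u i) ^ n ≤ (s.card : ℝ)⁻¹ * ∑ i ∈ s, u i ^ n := by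
    simpa only [Finset.mul_sum] using
      Real.pow_arith_mean_le_arith_mean_pow_of_even s (fun _ ↦ (s.card : ℝ)⁻¹) u
        (fun _ _ ↦ by positivity) (by simp [card_pos.ne']) hn
  refine (ENNReal.ofReal_le_ofReal jensen).trans_eq ?_
  rw [ENNReal.ofReal_mul (by positivity), ENNReal.ofReal_inv_of_pos card_pos,
    ENNReal.ofReal_natCast, ENNReal.ofReal_sum_of_nonneg fun i _ ↦ hn.pow_nonneg (u i)]

lemma lintegral_prodMk_of_indepFun {α β : Type*} [MeasurableSpace α] [MeasurableSpace β]
    [IsFiniteMeasure μ] {X : Ω → α} {Y : Ω → β} (hX : AEMeasurable X μ) (hY : AEMeasurable Y μ)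
    (hXY : IndepFun X Y μ) {f : α × β → ℝ≥0∞} (hf : Measurable f) :
    ∫⁻ ω, f (X ω, Y ω) ∂μ = ∫⁻ ω', ∫⁻ ω, f (X ω, Y ω') ∂μ ∂μ := by
  calc ∫⁻ ω, f (X ω, Y ω) ∂μ
      = ∫⁻ p, f p ∂(μ.map X).prod (μ.map Y) := by
        rw [← hXY.map_prod_eq_prod_map_map hX hY,
          lintegral_map' hf.aemeasurable (hX.prodMk hY)]
    _ = ∫⁻ y, ∫⁻ x, f (x, y) ∂μ.map X ∂μ.map Y := lintegral_prod_symm' f hf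
    _ = ∫⁻ ω', ∫⁻ x, f (x, Y ω') ∂μ.map X ∂μ :=
        lintegral_map' hf.lintegral_prod_left'.aemeasurable hY
    _ = ∫⁻ ω', ∫⁻ ω, f (X ω, Y ω') ∂μ ∂μ :=
        lintegral_congr fun ω' ↦ lintegral_map' (by fun_prop) hX

lemma lintegral_comp_ite {α : Type*} {p : Ω → Prop} [DecidablePred p]
    (hp : MeasurableSet {ω | p ω}) (g : α → ℝ≥0∞) (a b : α) :
    ∫⁻ ω, g (if p ω then a else b) ∂μ = g a * μ {ω | p ω} + g b * μ {ω | p ω}ᶜ := by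
  simp_rw [apply_ite g]
  simpa [Set.piecewise] using lintegral_piecewise (μ := μ) hp (fun _ ↦ g a) (fun _ ↦ g b)

lemma lintegral_standardized_bernoulli_pow_four [IsProbabilityMeasure μ] {p : Ω → Prop}
    [DecidablePred p] (hp : MeasurableSet {ω | p ω}) {t : ℝ} (ht : t ∈ Set.Ioo (0 : ℝ) 1)
    (hpt : μ {ω | p ω} = ENNReal.ofReal t) :
    ∫⁻ ω, ENNReal.ofReal ((((if p ω then 1 else 0) - t) / √(t * (1 - t))) ^ 4) ∂μ
      = ENNReal.ofReal (t⁻¹ * (1 - t)⁻¹ - 3) := by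
  obtain ⟨t_pos, t_lt_one⟩ := ht
  have : 0 < 1 - t := sub_pos.2 t_lt_one
  have hpt_compl : μ {ω | p ω}ᶜ = ENNReal.ofReal (1 - t) := by
    rw [prob_compl_eq_one_sub hp, hpt, ENNReal.ofReal_sub _ t_pos.le, ENNReal.ofReal_one]
  have sqrt_pow : √(t * (1 - t)) ^ 4 = (t * (1 - t)) ^ 2 := by
    rw [show 4 = 2 * 2 from rfl, pow_mul, Real.sq_sqrt (by positivity)]
  rw [lintegral_comp_ite hp (fun x : ℝ ↦ ENNReal.ofReal (((x - t) / √(t * (1 - t))) ^ 4)), hpt,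
    hpt_compl, ← ENNReal.ofReal_mul (by positivity), ← ENNReal.ofReal_mul (by positivity),
    ← ENNReal.ofReal_add (by positivity) (by positivity), div_pow, div_pow, sqrt_pow]
  congr 1
  field_simp
  ring

end General

section Threshold

variable {Ω : Type*} {d : ℕ} {Z θ : Ω → Fin d → ℝ} {Finv : Fin d → ℝ → ℝ} {j k : Fin d}

lemma ofReal_ustd_pow_mul_uavg_pow_le {A : Finset (Fin d)} (hA : A.Nonempty) {n : ℕ} (hn : Even n)
    (ω : Ω) :
    ENNReal.ofReal (Ustd Z θ Finv ω j ^ n * Uavg Z θ Finv A ω ^ n)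
      ≤ (A.card : ℝ≥0∞)⁻¹ * ∑ k ∈ A,
          ENNReal.ofReal (Ustd Z θ Finv ω j ^ n) * ENNReal.ofReal (Ustd Z θ Finv ω k ^ n) := by
  rw [ENNReal.ofReal_mul (hn.pow_nonneg _), ← Finset.mul_sum, mul_left_comm]
  gcongr
  exact ofReal_card_inv_mul_sum_pow_le hA _ hn

variable [MeasurableSpace Ω] {μ : Measure Ω}

lemma measurable_ustd (hZ : Measurable Z) (hθ : Measurable θ) (hF : Measurable (Finv j)) :
    Measurable fun ω ↦ Ustd Z θ Finv ω j := by
  have measurable_xbin : Measurable fun ω ↦ Xbin Z θ Finv ω j :=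
    .ite (measurableSet_le (by fun_prop) (by fun_prop)) measurable_const measurable_const
  unfold Ustd
  fun_prop

lemma indepFun_ustd_const (hF : ∀ i, Measurable (Finv i)) (t : Fin d → ℝ)
    (hZ : IndepFun (Z · j) (Z · k) μ) :
    IndepFun (Ustd Z (fun _ ↦ t) Finv · j) (Ustd Z (fun _ ↦ t) Finv · k) μ := by
  -- With `θ` frozen at `t`, the variable `U_i` is a function of `Z_i` alone.
  have measurable_score (i : Fin d) :
      Measurable fun z : ℝ ↦ Ustd (fun z _ ↦ z) (fun _ ↦ t) Finv z i :=
    measurable_ustd (by fun_prop) measurable_const (hF i)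
  exact hZ.comp (measurable_score j) (measurable_score k)

lemma lintegral_ustd_const_pow_four [IsProbabilityMeasure μ] (hZ : Measurable Z)
    {t : Fin d → ℝ} (ht : t j ∈ Set.Ioo (0 : ℝ) 1)
    (hquant : μ {ω | Z ω j ≤ Finv j (t j)} = ENNReal.ofReal (t j)) :
    ∫⁻ ω, ENNReal.ofReal (Ustd Z (fun _ ↦ t) Finv ω j ^ 4) ∂μ
      = ENNReal.ofReal ((t j)⁻¹ * (1 - t j)⁻¹ - 3) :=
  lintegral_standardized_bernoulli_pow_four
    (measurableSet_le (by fun_prop) measurable_const) ht hquant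

lemma lintegral_ustd_const_pow_four_mul_le [IsProbabilityMeasure μ] (hZ : Measurable Z)
    (hF : ∀ i, Measurable (Finv i)) {t : Fin d → ℝ} (ht : ∀ i, t i ∈ Set.Ioo (0 : ℝ) 1)
    (hquant : ∀ i, μ {ω | Z ω i ≤ Finv i (t i)} = ENNReal.ofReal (t i))
    (hZjk : IndepFun (Z · j) (Z · k) μ) :
    ∫⁻ ω, ENNReal.ofReal (Ustd Z (fun _ ↦ t) Finv ω j ^ 4)
        * ENNReal.ofReal (Ustd Z (fun _ ↦ t) Finv ω k ^ 4) ∂μ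
      ≤ ENNReal.ofReal ((t j)⁻¹ * (1 - t j)⁻¹ * ((t k)⁻¹ * (1 - t k)⁻¹)) := by
  have measurable_ofReal_pow : Measurable fun x : ℝ ↦ ENNReal.ofReal (x ^ 4) := by fun_prop
  have measurable_score (i : Fin d) := measurable_ofReal_pow.comp
    (measurable_ustd hZ (measurable_const (a := t)) (hF i))
  have indep := (indepFun_ustd_const hF t hZjk).comp measurable_ofReal_pow measurable_ofReal_pow
  have inv_mul_inv_nonneg : 0 ≤ (t j)⁻¹ * (1 - t j)⁻¹ :=
    mul_nonneg (inv_nonneg.2 (ht j).1.le) (inv_nonneg.2 (sub_nonneg.2 (ht j).2.le))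
  calc _ = (∫⁻ ω, ENNReal.ofReal (Ustd Z (fun _ ↦ t) Finv ω j ^ 4) ∂μ)
          * ∫⁻ ω, ENNReal.ofReal (Ustd Z (fun _ ↦ t) Finv ω k ^ 4) ∂μ :=
        lintegral_mul_eq_lintegral_mul_lintegral_of_indepFun
          (measurable_score j) (measurable_score k) indep
    _ = ENNReal.ofReal ((t j)⁻¹ * (1 - t j)⁻¹ - 3)
          * ENNReal.ofReal ((t k)⁻¹ * (1 - t k)⁻¹ - 3) := by
        rw [lintegral_ustd_const_pow_four hZ (ht j) (hquant j),
          lintegral_ustd_const_pow_four hZ (ht k) (hquant k)]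
    _ ≤ ENNReal.ofReal ((t j)⁻¹ * (1 - t j)⁻¹) * ENNReal.ofReal ((t k)⁻¹ * (1 - t k)⁻¹) := by
        gcongr <;> linarith
    _ = _ := (ENNReal.ofReal_mul inv_mul_inv_nonneg).symm

lemma lintegral_ustd_pow_four_mul_le [IsProbabilityMeasure μ] (hZ : Measurable Z)
    (hθ : Measurable θ) (hF : ∀ i, Measurable (Finv i))
    (hθ01 : ∀ ω i, θ ω i ∈ Set.Ioo (0 : ℝ) 1) (hindep : IndepFun Z θ μ)
    (hquant : ∀ i, ∀ t ∈ Set.Ioo (0 : ℝ) 1, μ {ω | Z ω i ≤ Finv i t} = ENNReal.ofReal t)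
    (hZjk : IndepFun (Z · j) (Z · k) μ) :
    ∫⁻ ω, ENNReal.ofReal (Ustd Z θ Finv ω j ^ 4) * ENNReal.ofReal (Ustd Z θ Finv ω k ^ 4) ∂μ
      ≤ ∫⁻ ω, ENNReal.ofReal
          ((θ ω j)⁻¹ * (1 - θ ω j)⁻¹ * ((θ ω k)⁻¹ * (1 - θ ω k)⁻¹)) ∂μ := by
  have measurable_score (i : Fin d) :
      Measurable fun p : (Fin d → ℝ) × (Fin d → ℝ) ↦
        ENNReal.ofReal (Ustd Prod.fst Prod.snd Finv p i ^ 4) :=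
    ((measurable_ustd measurable_fst measurable_snd (hF i)).pow_const 4).ennreal_ofReal
  calc _ = ∫⁻ ω', ∫⁻ ω, ENNReal.ofReal (Ustd Z (fun _ ↦ θ ω') Finv ω j ^ 4)
          * ENNReal.ofReal (Ustd Z (fun _ ↦ θ ω') Finv ω k ^ 4) ∂μ ∂μ :=
        lintegral_prodMk_of_indepFun hZ.aemeasurable hθ.aemeasurable hindep
          ((measurable_score j).mul (measurable_score k))
    _ ≤ _ := lintegral_mono fun ω' ↦ lintegral_ustd_const_pow_four_mul_le hZ hF (hθ01 ω')
        (fun i ↦ hquant i _ (hθ01 ω' i)) hZjk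

end Threshold

theorem stmt5_general {Ω : Type*} [MeasurableSpace Ω] (μ : Measure Ω) [IsProbabilityMeasure μ]
    (d : ℕ) (Z θ : Ω → Fin d → ℝ) (Finv : Fin d → ℝ → ℝ)
    (hZmeas : Measurable Z) (hθmeas : Measurable θ) (hFmeas : ∀ j, Measurable (Finv j))
    (hθ01 : ∀ ω j, θ ω j ∈ Set.Ioo (0 : ℝ) 1)
    (hindep : IndepFun Z θ μ)
    (hquant : ∀ j, ∀ t ∈ Set.Ioo (0 : ℝ) 1,
      μ {ω | Z ω j ≤ Finv j t} = ENNReal.ofReal t)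
    (j : Fin d) (A : Finset (Fin d)) (hA : A.Nonempty)
    (hZjk : ∀ k ∈ A, IndepFun (Z · j) (Z · k) μ) :
    ∫⁻ ω, ENNReal.ofReal ((Ustd Z θ Finv ω j) ^ 4 * (Uavg Z θ Finv A ω) ^ 4) ∂μ
      ≤ (A.card : ℝ≥0∞)⁻¹ * ∑ k ∈ A, ∫⁻ ω,
          ENNReal.ofReal
            ((θ ω j)⁻¹ * (1 - θ ω j)⁻¹ * ((θ ω k)⁻¹ * (1 - θ ω k)⁻¹)) ∂μ := by
  have measurable_score (i : Fin d) : Measurable fun ω ↦ ENNReal.ofReal (Ustd Z θ Finv ω i ^ 4) :=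
    ((measurable_ustd hZmeas hθmeas (hFmeas i)).pow_const 4).ennreal_ofReal
  calc _ ≤ ∫⁻ ω, (A.card : ℝ≥0∞)⁻¹ * ∑ k ∈ A, ENNReal.ofReal (Ustd Z θ Finv ω j ^ 4)
          * ENNReal.ofReal (Ustd Z θ Finv ω k ^ 4) ∂μ :=
        lintegral_mono (ofReal_ustd_pow_mul_uavg_pow_le hA (by decide))
    _ = (A.card : ℝ≥0∞)⁻¹ * ∑ k ∈ A, ∫⁻ ω, ENNReal.ofReal (Ustd Z θ Finv ω j ^ 4)
          * ENNReal.ofReal (Ustd Z θ Finv ω k ^ 4) ∂μ := by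
        rw [lintegral_const_mul _ (by fun_prop), lintegral_finsetSum _ (by fun_prop)]
    _ ≤ _ := by
        gcongr _ * ∑ k ∈ A, ?_ with k hk
        exact lintegral_ustd_pow_four_mul_le hZmeas hθmeas hFmeas hθ01 hindep hquant (hZjk k hk)

/-- Under the threshold model, if `Z_j` is independent of `{Z_k : k ∈ A}` (with `j ∉ A`),
then `E[U_j⁴ U_A⁴] ≤ |A|⁻¹ ∑_{k∈A} E[θ_j⁻¹(1−θ_j)⁻¹ θ_k⁻¹(1−θ_k)⁻¹]`. -/
theorem stmt5 {Ω : Type*} [MeasurableSpace Ω] (μ : Measure Ω) [IsProbabilityMeasure μ]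
    (d : ℕ) (Z θ : Ω → Fin d → ℝ) (Finv : Fin d → ℝ → ℝ)
    (hZmeas : Measurable Z) (hθmeas : Measurable θ) (hFmeas : ∀ j, Measurable (Finv j))
    (hθ01 : ∀ ω j, θ ω j ∈ Set.Ioo (0 : ℝ) 1)
    (hindep : IndepFun Z θ μ)
    (hquant : ∀ j, ∀ t ∈ Set.Ioo (0 : ℝ) 1,
      μ {ω | Z ω j ≤ Finv j t} = ENNReal.ofReal t)
    (j : Fin d) (A : Finset (Fin d)) (hA : A.Nonempty) (hjA : j ∉ A)
    (hZjA : IndepFun (fun ω => Z ω j) (fun ω (k : A) => Z ω (k : Fin d)) μ) :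
    ∫⁻ ω, ENNReal.ofReal ((Ustd Z θ Finv ω j) ^ 4 * (Uavg Z θ Finv A ω) ^ 4) ∂μ
      ≤ (A.card : ℝ≥0∞)⁻¹ * ∑ k ∈ A, ∫⁻ ω,
          ENNReal.ofReal
            ((θ ω j)⁻¹ * (1 - θ ω j)⁻¹ * ((θ ω k)⁻¹ * (1 - θ ω k)⁻¹)) ∂μ :=
  stmt5_general μ d Z θ Finv hZmeas hθmeas hFmeas hθ01 hindep hquant j A hA fun k hk ↦
    hZjA.comp measurable_id (measurable_pi_apply (⟨k, hk⟩ : A))
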